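/- Let 1 ≤ k ≤ n and let 𝕴 : 𝕏_n × 𝕏_n → ℝ be a complete n-symmetric kernel. Then the kernel 𝕴'(x_{1⃗}, x_{2⃗}) := ½ ∫ 𝕴(x_{1⃗}, y) dμ_k^n[x_{2⃗}, x_{1⃗}](y) + ½ ∫ 𝕴(x_{2⃗}, y) dμ_k^n[x_{1⃗}, x_{2⃗}](y) is also complete n-symmetric, and 𝕴 is PDI_k if and only if 𝕴' is PDI_k. Furthermore, when k = n, this 𝕴' coincides with the kernel (x_{1⃗},x_{2⃗}) ↦ 2^{−n} ∑_{α,β∈{1,2}^n} (−1)^{n−|α|−|β|} 𝕴(x_α, x_β). -/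

import Mathlib

noncomputable section

open Finset

namespace PDIPaper

variable {ι : Type*} [Fintype ι] [DecidableEq ι] {X : ι → Type*}

/-- The grid point `x_α` determined by grid data `x` and a multi-index `α`. -/
def gridPt {m : ℕ} (x : ∀ i, Fin m → X i) (α : ι → Fin m) : ∀ i, X i :=
  fun i => x i (α i)

/-- The point whose coordinates in `F` come from `a` and whose coordinates outside
`F` come from `b` (the point `a_F + b_{F^c}`). -/
def comb (F : Finset ι) (a b : ∀ i, X i) : ∀ i, X i :=
  fun i => if i ∈ F then a i else b i

/-- Glue an `F`-indexed point and an `Fᶜ`-indexed point into a full point. -/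
def glue (F : Finset ι) (a : ∀ i : {i // i ∈ F}, X i.1)
    (b : ∀ i : {i // i ∈ Fᶜ}, X i.1) : ∀ i, X i :=
  fun i => if h : i ∈ F then a ⟨i, h⟩ else b ⟨i, Finset.mem_compl.mpr h⟩

/-- The coefficients `c` of a discrete measure (supported on a grid with `m` points
in each coordinate) belong to `ℳ_k`: for every coordinate subset `F` of cardinality
`n - k + 1` and every fixed multi-index `β` off `F`, the sum of the coefficients over
the `F`-indices vanishes. -/
def MemM (k : ℕ) {m : ℕ} (c : (ι → Fin m) → ℝ) : Prop :=
  ∀ F : Finset ι, F.card = Fintype.card ι - k + 1 →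
    ∀ β : ι → Fin m,
      (∑ σ : {i // i ∈ F} → Fin m,
        c fun i => if h : i ∈ F then σ ⟨i, h⟩ else β i) = 0

/-- The double integral `∬ I dμ dμ` of a kernel against a discrete measure with
grid `x` and coefficients `c`. -/
def dSum {m : ℕ} (I : (∀ i, X i) → (∀ i, X i) → ℝ)
    (x : ∀ i, Fin m → X i) (c : (ι → Fin m) → ℝ) : ℝ :=
  ∑ α : ι → Fin m, ∑ β : ι → Fin m, c α * c β * I (gridPt x α) (gridPt x β)

/-- `sel x1 x2 α` is the point `x_α` for `α ∈ {1,2}^n`, encoded by `Bool`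
(`false ↦ 1`, `true ↦ 2`). -/
def sel (x1 x2 : ∀ i, X i) (α : ι → Bool) : ∀ i, X i :=
  fun i => if α i then x2 i else x1 i

/-- `n`-symmetry of a kernel: `I (x_α) (x_{3⃗-α}) = I x1 x2` for all `α ∈ {1,2}^n`. -/
def NSymm (I : (∀ i, X i) → (∀ i, X i) → ℝ) : Prop :=
  ∀ (x1 x2 : ∀ i, X i) (α : ι → Bool),
    I (sel x1 x2 α) (sel x1 x2 fun i => !(α i)) = I x1 x2

/-- Complete `n`-symmetry of a kernel. -/
def CompleteNSymm (I : (∀ i, X i) → (∀ i, X i) → ℝ) : Prop :=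
  NSymm I ∧ ∀ (F : Finset ι) (x1 x2 x3 x4 : ∀ i, X i),
    I (comb F x1 x3) (comb F x2 x3) = I (comb F x1 x4) (comb F x2 x4)

/-- Positive definite independent kernel of order `k`: an `n`-symmetric kernel with
`∬ (-1)^k I dμ dμ ≥ 0` for every discrete measure `μ ∈ ℳ_k`. -/
def IsPDI (k : ℕ) (I : (∀ i, X i) → (∀ i, X i) → ℝ) : Prop :=
  NSymm I ∧
    ∀ (m : ℕ) (x : ∀ i, Fin m → X i), (∀ i, Function.Injective (x i)) →
      ∀ c : (ι → Fin m) → ℝ, MemM k c →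
        0 ≤ (-1 : ℝ) ^ k * dSum I x c

/-- Strictly positive definite independent kernel of order `k`. -/
def IsSPDI (k : ℕ) (I : (∀ i, X i) → (∀ i, X i) → ℝ) : Prop :=
  NSymm I ∧
    ∀ (m : ℕ) (x : ∀ i, Fin m → X i), (∀ i, Function.Injective (x i)) →
      ∀ c : (ι → Fin m) → ℝ, MemM k c → (∃ α, c α ≠ 0) →
        0 < (-1 : ℝ) ^ k * dSum I x c

/-- The kernel vanishes on the extended diagonal `Δ_{k-1}^n`, i.e. on pairs of points
agreeing in at least `n - k + 1` coordinates. -/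
def ZeroAtDiag (k : ℕ) (I : (∀ i, X i) → (∀ i, X i) → ℝ) : Prop :=
  ∀ x1 x2 : ∀ i, X i,
    (∃ s : Finset ι, s.card = Fintype.card ι - k + 1 ∧ ∀ i ∈ s, x1 i = x2 i) →
    I x1 x2 = 0

/-- Conditionally negative definite (CND) symmetric kernel. -/
def IsCND {Z : Type*} (γ : Z → Z → ℝ) : Prop :=
  (∀ a b, γ a b = γ b a) ∧
    ∀ (m : ℕ) (z : Fin m → Z) (c : Fin m → ℝ), (∑ i, c i) = 0 →
      (∑ i, ∑ j, c i * c j * γ (z i) (z j)) ≤ 0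

/-- Positive definite kernel (quadratic-form condition). -/
def IsPD {Z : Type*} (K : Z → Z → ℝ) : Prop :=
  ∀ (m : ℕ) (z : Fin m → Z) (c : Fin m → ℝ),
    0 ≤ ∑ i, ∑ j, c i * c j * K (z i) (z j)

/-- Integral of `f` against the discrete measure
`μ_k^n[x1, x2] = δ_{x1} + ∑_{j=0}^{k-1} (-1)^{k-j} C(n-j-1, n-k) ∑_{|F|=j} δ_{x1_F + x2_{F^c}}`. -/
def muInt (k : ℕ) (x1 x2 : ∀ i, X i) (f : (∀ i, X i) → ℝ) : ℝ :=
  f x1 + ∑ j ∈ Finset.range k,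
    (-1 : ℝ) ^ (k - j) *
      ((Nat.choose (Fintype.card ι - j - 1) (Fintype.card ι - k) : ℕ) : ℝ) *
      ∑ F ∈ Finset.powersetCard j (Finset.univ : Finset ι), f (comb F x1 x2)

/-- The kernel `𝕴'` of Lemma `PDI2simpli`. -/
def stmt9Kernel {n : ℕ} {X : Fin n → Type*} (k : ℕ)
    (I : (∀ i, X i) → (∀ i, X i) → ℝ) : (∀ i, X i) → (∀ i, X i) → ℝ :=
  fun x1 x2 =>
    (1 / 2 : ℝ) * muInt k x2 x1 (fun y => I x1 y) +
      (1 / 2 : ℝ) * muInt k x1 x2 (fun y => I x2 y)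

/-- The kernel `𝕴'` of Lemma `PDInsimpli`:
`(x1,x2) ↦ 2^{-n} ∑_{α,β ∈ {1,2}^n} (-1)^{n-|α|-|β|} 𝕴(x_α, x_β)`. -/
def stmt9KernelN {n : ℕ} {X : Fin n → Type*}
    (I : (∀ i, X i) → (∀ i, X i) → ℝ) : (∀ i, X i) → (∀ i, X i) → ℝ :=
  fun x1 x2 =>
    ((2 : ℝ) ^ n)⁻¹ *
      ∑ α : Fin n → Bool, ∑ β : Fin n → Bool,
        (-1 : ℝ) ^ ((n : ℤ) - ((∑ i, if α i then 2 else 1 : ℕ) : ℤ)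
            - ((∑ i, if β i then 2 else 1 : ℕ) : ℤ)) *
          I (sel x1 x2 α) (sel x1 x2 β)

theorem aux_IF (I : (∀ i, X i) → (∀ i, X i) → ℝ) (hc : CompleteNSymm I) (F : Finset ι)
    (x1 x2 : ∀ i, X i) (α β : ι → Bool) (h : ∀ i, i ∈ F ↔ α i ≠ β i) :
    I (sel x1 x2 α) (sel x1 x2 β) = I x1 (comb F x2 x1) := by
  have h1 := hc.2 F (sel x1 x2 α) (sel x1 x2 β) (sel x1 x2 α) x1
  have h2 := hc.1 x1 (comb F x2 x1) α
  have e1 : comb F (sel x1 x2 α) (sel x1 x2 α) = sel x1 x2 α := by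
    funext i; simp [comb]
  have e2 : comb F (sel x1 x2 β) (sel x1 x2 α) = sel x1 x2 β := by
    funext i
    have := h i
    by_cases hi : i ∈ F
    · simp [comb, hi]
    · have : α i = β i := by tauto
      simp [comb, hi, sel, this]
  have e3 : comb F (sel x1 x2 α) x1 = sel x1 (comb F x2 x1) α := by
    funext i; by_cases hi : i ∈ F <;> simp [comb, hi, sel]
  have e4 : comb F (sel x1 x2 β) x1 = sel x1 (comb F x2 x1) (fun i => !(α i)) := by
    funext i
    have := h i
    by_cases hi : i ∈ F
    · have : β i = !(α i) := by
        have := this.1 hi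
        cases hα : α i <;> cases hβ : β i <;> simp_all
      simp [comb, hi, sel, this]
    · simp [comb, hi, sel]
  rw [e1, e2, e3, e4, h2] at h1
  exact h1

theorem aux_swap (I : (∀ i, X i) → (∀ i, X i) → ℝ) (hc : CompleteNSymm I) (F : Finset ι)
    (x1 x2 : ∀ i, X i) : I x2 (comb F x1 x2) = I x1 (comb F x2 x1) := by
  rw [← aux_IF I hc F x1 x2 (fun _ => true) (fun i => !(decide (i ∈ F))) (by intro i; simp)]
  congr 1
  funext i
  by_cases hi : i ∈ F <;> simp [comb, hi, sel]

theorem aux_left (I : (∀ i, X i) → (∀ i, X i) → ℝ) (hc : CompleteNSymm I) (F : Finset ι)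
    (x1 x2 : ∀ i, X i) : I x1 (comb F x2 x1) = I (comb F x1 x2) x2 := by
  have := hc.2 F x1 x2 x1 x2
  have e1 : comb F x1 x1 = x1 := by funext i; simp [comb]
  have e2 : comb F x2 x2 = x2 := by funext i; simp [comb]
  rwa [e1, e2] at this

theorem aux_complete (I : (∀ i, X i) → (∀ i, X i) → ℝ) (hc : CompleteNSymm I) (F : Finset ι) :
    CompleteNSymm (fun x1 x2 => I x1 (comb F x2 x1)) := by
  constructor
  · intro x1 x2 α
    show I (sel x1 x2 α) (comb F (sel x1 x2 fun i => !(α i)) (sel x1 x2 α)) = I x1 (comb F x2 x1)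
    rw [← aux_IF I hc F x1 x2 α (fun i => if i ∈ F then !(α i) else α i)
      (by intro i; by_cases hi : i ∈ F <;> simp [hi])]
    congr 1
    funext i
    by_cases hi : i ∈ F <;> simp [comb, hi, sel]
  · intro G x1 x2 x3 x4
    have key : ∀ x3 : ∀ i, X i, comb F (comb G x2 x3) (comb G x1 x3) = comb G (comb F x2 x1) x3 := by
      intro x3
      funext i
      by_cases hi : i ∈ F <;> by_cases hj : i ∈ G <;> simp [comb, hi, hj]
    show I (comb G x1 x3) (comb F (comb G x2 x3) (comb G x1 x3)) =
      I (comb G x1 x4) (comb F (comb G x2 x4) (comb G x1 x4))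
    rw [key, key]
    exact hc.2 G x1 _ x3 x4

theorem aux_sum0 {k m : ℕ} (c : (ι → Fin m) → ℝ) (hM : MemM k c) (F : Finset ι)
    (hk2 : k ≤ Fintype.card ι) (hF : F.card < k)
    (f : (ι → Fin m) → ℝ) (hf : ∀ α α', (∀ i ∈ F, α i = α' i) → f α = f α') :
    ∑ α, c α * f α = 0 := by
  obtain ⟨G, hGF, hG⟩ : ∃ G ⊆ Fᶜ, G.card = Fintype.card ι - k + 1 := by
    apply Finset.exists_subset_card_eq
    rw [Finset.card_compl]; omega
  rw [← (Equiv.piEquivPiSubtypeProd (fun i => i ∈ G) (fun _ => Fin m)).symm.sum_comp,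
    Fintype.sum_prod_type_right]
  apply Finset.sum_eq_zero
  intro τ _
  rcases isEmpty_or_nonempty ({i // i ∈ G} → Fin m) with he | ⟨⟨σ0⟩⟩
  · simp
  · let β : ι → Fin m :=
      (Equiv.piEquivPiSubtypeProd (fun i => i ∈ G) (fun _ => Fin m)).symm (σ0, τ)
    have h1 := hM G hG β
    have h2 : ∀ σ : {i // i ∈ G} → Fin m,
        (Equiv.piEquivPiSubtypeProd (fun i => i ∈ G) (fun _ => Fin m)).symm (σ, τ) =
        fun i => if h : i ∈ G then σ ⟨i, h⟩ else β i := by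
      intro σ
      funext i
      by_cases hi : i ∈ G <;> simp [β, Equiv.piEquivPiSubtypeProd, hi]
    have h3 : ∀ σ : {i // i ∈ G} → Fin m,
        f (fun i => if h : i ∈ G then σ ⟨i, h⟩ else β i) = f β := by
      intro σ
      apply hf
      intro i hi
      have : i ∉ G := fun hg => by
        have := hGF hg
        simp at this
        exact this hi
      simp [this]
    simp_rw [h2, h3]
    rw [← Finset.sum_mul, h1, zero_mul]

theorem aux_dSum0 {k m : ℕ} (I : (∀ i, X i) → (∀ i, X i) → ℝ) (hc : CompleteNSymm I)
    (x : ∀ i, Fin m → X i) (c : (ι → Fin m) → ℝ) (hM : MemM k c) (F : Finset ι)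
    (hk2 : k ≤ Fintype.card ι) (hF : F.card < k) :
    dSum (fun x1 x2 => I x1 (comb F x2 x1)) x c = 0 := by
  unfold dSum
  rw [Finset.sum_comm]
  apply Finset.sum_eq_zero
  intro β _
  have := aux_sum0 c hM F hk2 hF
    (fun α => c β * I (comb F (gridPt x α) (gridPt x β)) (gridPt x β)) (by
      intro α α' h
      have : comb F (gridPt x α) (gridPt x β) = comb F (gridPt x α') (gridPt x β) := by
        funext i
        by_cases hi : i ∈ F
        · simp [comb, hi, gridPt, h i hi]
        · simp [comb, hi]
      simp only [this])
  rw [← this]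
  apply Finset.sum_congr rfl
  intro α _
  simp only [aux_left I hc F (gridPt x α) (gridPt x β)]
  ring

theorem aux_ker {n k : ℕ} {X : Fin n → Type*}
    (I : (∀ i, X i) → (∀ i, X i) → ℝ) (hc : CompleteNSymm I) (x1 x2 : ∀ i, X i) :
    stmt9Kernel k I x1 x2 = muInt k x2 x1 (fun y => I x1 y) := by
  have h0 : I x2 x1 = I x1 x2 := by
    have := aux_swap I hc Finset.univ x1 x2
    have e : ∀ a b : ∀ i, X i, comb Finset.univ a b = a := fun a b => by funext i; simp [comb]
    rwa [e, e] at this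
  unfold stmt9Kernel muInt
  simp_rw [aux_swap I hc _ x1 x2, h0]
  ring

theorem aux_sign {n : ℕ} (α β : Fin n → Bool) :
    (-1 : ℝ) ^ ((n : ℤ) - ((∑ i, if α i then 2 else 1 : ℕ) : ℤ)
            - ((∑ i, if β i then 2 else 1 : ℕ) : ℤ)) =
    (-1 : ℝ) ^ (n - (Finset.univ.filter fun i => α i ≠ β i).card) := by
  set F := Finset.univ.filter fun i => α i ≠ β i with hF
  have hle : F.card ≤ n := by simpa using F.card_le_univ
  have h : (∑ i, if α i then 2 else 1 : ℕ) + (∑ i, if β i then 2 else 1 : ℕ) =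
      2 * (∑ i, if α i && β i then 2 else 1 : ℕ) + F.card := by
    rw [hF, Finset.card_filter, Finset.mul_sum, ← Finset.sum_add_distrib, ← Finset.sum_add_distrib]
    apply Finset.sum_congr rfl
    intro i _
    cases α i <;> cases β i <;> simp
  have h' : (n : ℤ) - ((∑ i, if α i then 2 else 1 : ℕ) : ℤ)
            - ((∑ i, if β i then 2 else 1 : ℕ) : ℤ) =
      ((n - F.card : ℕ) : ℤ) + 2 * (-((∑ i, if α i && β i then 2 else 1 : ℕ) : ℤ)) := by
    rw [Nat.cast_sub hle]
    have : (((∑ i, if α i then 2 else 1 : ℕ) : ℤ)) + ((∑ i, if β i then 2 else 1 : ℕ) : ℤ) =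
      2 * ((∑ i, if α i && β i then 2 else 1 : ℕ) : ℤ) + F.card := by exact_mod_cast h
    linarith
  rw [h', zpow_add₀ (by norm_num), zpow_natCast, (even_two_mul _).neg_one_zpow, mul_one]

theorem aux_kerN {n : ℕ} {X : Fin n → Type*}
    (I : (∀ i, X i) → (∀ i, X i) → ℝ) (hc : CompleteNSymm I) (x1 x2 : ∀ i, X i) :
    stmt9KernelN I x1 x2 =
      ∑ F : Finset (Fin n), (-1 : ℝ) ^ (n - F.card) * I x1 (comb F x2 x1) := by
  unfold stmt9KernelN
  have h : ∀ α : Fin n → Bool, (∑ β : Fin n → Bool,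
        (-1 : ℝ) ^ ((n : ℤ) - ((∑ i, if α i then 2 else 1 : ℕ) : ℤ)
            - ((∑ i, if β i then 2 else 1 : ℕ) : ℤ)) *
          I (sel x1 x2 α) (sel x1 x2 β)) =
      ∑ F : Finset (Fin n), (-1 : ℝ) ^ (n - F.card) * I x1 (comb F x2 x1) := by
    intro α
    apply Finset.sum_nbij' (fun β => Finset.univ.filter fun i => α i ≠ β i)
      (fun F i => xor (α i) (decide (i ∈ F)))
    · simp
    · simp
    · intro β _
      funext i
      cases hα : α i <;> cases hβ : β i <;> simp [hα, hβ]
    · intro F _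
      ext i
      by_cases hi : i ∈ F <;> cases hα : α i <;> simp [hα, hi]
    · intro β _
      rw [aux_sign, aux_IF I hc (Finset.univ.filter fun i => α i ≠ β i) x1 x2 α β (by simp)]
  simp_rw [h]
  rw [Finset.sum_const]
  simp

theorem aux_muN {n : ℕ} {X : Fin n → Type*} (x1 x2 : ∀ i, X i) (f : (∀ i, X i) → ℝ) :
    muInt n x1 x2 f = ∑ F : Finset (Fin n), (-1 : ℝ) ^ (n - F.card) * f (comb F x1 x2) := by
  have e : comb Finset.univ x1 x2 = x1 := by funext i; simp [comb]
  rw [← Finset.powerset_univ, Finset.sum_powerset]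
  rw [Finset.card_univ, Fintype.card_fin, Finset.sum_range_succ, add_comm]
  have e2 : Finset.powersetCard n (Finset.univ : Finset (Fin n)) = {Finset.univ} := by
    have h := Finset.powersetCard_self (Finset.univ : Finset (Fin n))
    simpa only [Finset.card_univ, Fintype.card_fin] using h
  unfold muInt
  rw [e2, Finset.sum_singleton, e]
  simp only [Finset.card_univ, Fintype.card_fin, Nat.sub_self, pow_zero, one_mul,
    Nat.choose_zero_right, Nat.cast_one, mul_one]
  congr 1
  apply Finset.sum_congr rfl
  intro j _
  rw [Finset.mul_sum]
  apply Finset.sum_congr rfl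
  intro F hF
  rw [(Finset.mem_powersetCard.1 hF).2]

theorem aux_dSum {n k m : ℕ} {X : Fin n → Type*} (hk2 : k ≤ n)
    (I : (∀ i, X i) → (∀ i, X i) → ℝ) (hc : CompleteNSymm I)
    (x : ∀ i, Fin m → X i) (c : (Fin n → Fin m) → ℝ) (hM : MemM k c) :
    dSum (stmt9Kernel k I) x c = dSum I x c := by
  have h0 : dSum (stmt9Kernel k I) x c = dSum I x c + ∑ j ∈ Finset.range k,
    (-1 : ℝ) ^ (k - j) *
      ((Nat.choose (Fintype.card (Fin n) - j - 1) (Fintype.card (Fin n) - k) : ℕ) : ℝ) *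
      ∑ F ∈ Finset.powersetCard j (Finset.univ : Finset (Fin n)),
        dSum (fun x1 x2 => I x1 (comb F x2 x1)) x c := by
    unfold dSum
    simp_rw [aux_ker I hc]
    unfold muInt
    simp_rw [mul_add, Finset.sum_add_distrib]
    congr 1
    simp_rw [Finset.mul_sum]
    have sw : ∀ g : (Fin n → Fin m) → (Fin n → Fin m) → ℕ → Finset (Fin n) → ℝ,
        ∑ a, ∑ b, ∑ j ∈ Finset.range k, ∑ F ∈ Finset.powersetCard j Finset.univ, g a b j F =
        ∑ j ∈ Finset.range k, ∑ F ∈ Finset.powersetCard j Finset.univ, ∑ a, ∑ b, g a b j F := by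
      intro g
      simp_rw [Finset.sum_comm (s := (Finset.univ : Finset (Fin n → Fin m)))
        (t := Finset.range k)]
      refine Finset.sum_congr rfl fun j _ => ?_
      simp_rw [Finset.sum_comm (s := (Finset.univ : Finset (Fin n → Fin m)))
        (t := Finset.powersetCard j Finset.univ)]
    rw [sw]
    refine Finset.sum_congr rfl fun j _ => Finset.sum_congr rfl fun F _ =>
      Finset.sum_congr rfl fun a _ => Finset.sum_congr rfl fun b _ => ?_
    ring
  rw [h0, add_eq_left]
  apply Finset.sum_eq_zero
  intro j hj
  rw [Finset.sum_eq_zero, mul_zero]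
  intro F hF
  apply aux_dSum0 I hc x c hM F (by simpa using hk2)
  rw [(Finset.mem_powersetCard.1 hF).2]
  exact Finset.mem_range.1 hj

theorem aux_ker_complete {n k : ℕ} {X : Fin n → Type*}
    (I : (∀ i, X i) → (∀ i, X i) → ℝ) (hc : CompleteNSymm I) :
    CompleteNSymm (stmt9Kernel k I) := by
  constructor
  · intro x1 x2 α
    rw [aux_ker I hc, aux_ker I hc]
    unfold muInt
    have h := fun F => (aux_complete I hc F).1 x1 x2 α
    simp only at h
    simp_rw [h, hc.1 x1 x2 α]
  · intro G x1 x2 x3 x4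
    rw [aux_ker I hc, aux_ker I hc]
    unfold muInt
    have h := fun F => (aux_complete I hc F).2 G x1 x2 x3 x4
    simp only at h
    simp_rw [h, hc.2 G x1 x2 x3 x4]

theorem statement9 {n k : ℕ} (hk1 : 1 ≤ k) (hk2 : k ≤ n) (X : Fin n → Type*)
    (I : (∀ i, X i) → (∀ i, X i) → ℝ) (hc : CompleteNSymm I) :
    CompleteNSymm (stmt9Kernel k I) ∧
      (IsPDI k I ↔ IsPDI k (stmt9Kernel k I)) ∧
      (k = n → stmt9Kernel k I = stmt9KernelN I) := by
  refine ⟨aux_ker_complete I hc, ⟨fun h => ⟨(aux_ker_complete I hc).1, ?_⟩, fun h => ⟨hc.1, ?_⟩⟩, ?_⟩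
  · intro m x hx c hM
    rw [aux_dSum hk2 I hc x c hM]
    exact h.2 m x hx c hM
  · intro m x hx c hM
    rw [← aux_dSum hk2 I hc x c hM]
    exact h.2 m x hx c hM
  · rintro rfl
    funext x1 x2
    rw [aux_ker I hc, aux_kerN I hc, aux_muN]

end PDIPaper
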